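/- Let G = G₁ *_K G₂ be an amalgamated free product along injective homomorphisms φ₁ : K → G₁ and φ₂ : K → G₂, let A and B be the images in G of G₁ and G₂ under the canonical inclusions, and U the image of K. Let H be a subgroup of G and H₀ the subgroup generated by (A ∩ H) ∪ (B ∩ H). Assume that: (1) there exists a ∈ A with a ∉ (A ∩ H)·U; and (2) there exists b ∈ B with b ∉ U and aba⁻¹ ∈ H. Then H ≠ H₀. -/

import Mathlib

open Pointwise

/-!
If `H = H₀`, every element of `H` is a product of elements of `A ∩ H` and `B ∩ H`. Merging
neighbouring factors from the same side, and pushing factors from `U` to the left, such a product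
takes the form `u * h₁ * ⋯ * hₙ` with `u ∈ U ∩ H` and `h₁ ⋯ hₙ` a reduced word whose letters all
lie in `H` (`exists_reduced_of_mem_closure`). Write `a * b * a⁻¹` in this form. Then
`a * b⁻¹ * (a⁻¹ * u * h₁ * ⋯ * hₙ) = 1`. Because `a ∉ (A ∩ H) * U`, the factor `a⁻¹ * u`, or
`a⁻¹ * u * h₁` in case `h₁ ∈ A`, is an element of `A` outside `U`; hence the left-hand side is a
nonempty reduced word, which cannot represent an element of `U` by the normal form theorem
(`Monoid.PushoutI.Reduced.eq_empty_of_mem_range`).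
-/

namespace AmalgamConj

open Monoid Monoid.CoprodI Monoid.PushoutI

variable {ι : Type*} {K : Type*} [Group K] {G : ι → Type*} [∀ i, Group (G i)]
  {φ : ∀ i, K →* G i}

/-- A reduced word with a letter outside the base group prepended. -/
theorem exists_reduced_cons {i : ι} (g : G i) (hg : g ∉ (φ i).range) (w : Word G)
    (hw : Reduced φ w) (hi : w.fstIdx ≠ some i) :
    ∃ w' : Word G, Reduced φ w' ∧ w'.toList = ⟨i, g⟩ :: w.toList ∧
      (ofCoprodI w'.prod : PushoutI φ) = of i g * ofCoprodI w.prod := by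
  have hg1 : g ≠ 1 := by
    rintro rfl
    exact hg (one_mem _)
  refine ⟨Word.cons g w hi hg1, ?_, rfl, by simp⟩
  intro x hx
  rcases List.mem_cons.1 hx with rfl | hx
  · exact hg
  · exact hw _ hx

/-- Every reduced word can be split as `g₀ * w'` with `g₀ : G i` (possibly trivial) and `w'` a
reduced word not starting in `G i`, without leaving any subgroup `H` that contains all letters. -/
theorem exists_split (H : Subgroup (PushoutI φ)) (i : ι) (w : Word G) (hw : Reduced φ w)
    (hH : ∀ l ∈ w.toList, (of l.1 l.2 : PushoutI φ) ∈ H) :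
    ∃ (g₀ : G i) (w' : Word G), (of i g₀ : PushoutI φ) ∈ H ∧ Reduced φ w' ∧
      (∀ l ∈ w'.toList, (of l.1 l.2 : PushoutI φ) ∈ H) ∧ w'.fstIdx ≠ some i ∧
      (ofCoprodI w.prod : PushoutI φ) = of i g₀ * ofCoprodI w'.prod := by
  by_cases hi : w.fstIdx = some i
  · induction w using Word.consRecOn with
    | empty => simp [Word.fstIdx, Word.empty] at hi
    | cons j g w h1 hg1 _ =>
      obtain rfl : j = i := by simpa [Word.fstIdx, Word.cons] using hi
      exact ⟨g, w, hH ⟨j, g⟩ List.mem_cons_self,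
        fun l hl => hw l (List.mem_cons_of_mem _ hl),
        fun l hl => hH l (List.mem_cons_of_mem _ hl), h1, by simp⟩
  · exact ⟨1, w, by simp, hw, hH, hi, by simp⟩

/-- Elements of the subgroup generated by the intersections of `H` with the factors are products
of an element of `H` in the base group and a reduced word with all letters in `H`. -/
theorem exists_reduced_of_mem_closure (H : Subgroup (PushoutI φ)) (S : Set (PushoutI φ))
    (hS : ∀ x ∈ S, x ∈ H ∧ ∃ i, x ∈ (of (φ := φ) i).range)
    (x : PushoutI φ) (hx : x ∈ Subgroup.closure S) :
    ∃ (k : K) (w : Word G), base φ k ∈ H ∧ Reduced φ w ∧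
      (∀ l ∈ w.toList, (of l.1 l.2 : PushoutI φ) ∈ H) ∧
      x = base φ k * ofCoprodI w.prod := by
  have step : ∀ (i : ι) (g : G i) (y : PushoutI φ), (of i g : PushoutI φ) ∈ H →
      (∃ (k : K) (w : Word G), base φ k ∈ H ∧ Reduced φ w ∧
        (∀ l ∈ w.toList, (of l.1 l.2 : PushoutI φ) ∈ H) ∧
        y = base φ k * ofCoprodI w.prod) →
      ∃ (k : K) (w : Word G), base φ k ∈ H ∧ Reduced φ w ∧
        (∀ l ∈ w.toList, (of l.1 l.2 : PushoutI φ) ∈ H) ∧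
        of i g * y = base φ k * ofCoprodI w.prod := by
    rintro i g _ hg ⟨k, w, hk, hw, hwH, rfl⟩
    obtain ⟨g₀, w', hg₀, hw', hwH', hi, hprod⟩ := exists_split H i w hw hwH
    have hmem : (of i (g * φ i k * g₀) : PushoutI φ) ∈ H := by
      rw [map_mul, map_mul, of_apply_eq_base]
      exact mul_mem (mul_mem hg hk) hg₀
    have heq : of i g * (base φ k * ofCoprodI w.prod) =
        of i (g * φ i k * g₀) * ofCoprodI w'.prod := by
      rw [hprod, map_mul, map_mul, of_apply_eq_base]
      simp only [mul_assoc]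
    by_cases hr : g * φ i k * g₀ ∈ (φ i).range
    · obtain ⟨k', hk'⟩ := hr
      rw [← hk', of_apply_eq_base] at hmem heq
      exact ⟨k', w', hmem, hw', hwH', heq⟩
    · obtain ⟨w'', hred, hlist, hprod'⟩ := exists_reduced_cons _ hr w' hw' hi
      refine ⟨1, w'', by simp, hred, ?_, by rw [heq, hprod', map_one, one_mul]⟩
      intro l hl
      rw [hlist] at hl
      rcases List.mem_cons.1 hl with rfl | hl
      · exact hmem
      · exact hwH' _ hl
  induction hx using Subgroup.closure_induction_left with
  | one => exact ⟨1, Word.empty, by simp, by simp [Reduced, Word.empty],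
      by simp [Word.empty], by simp⟩
  | mul_left x hx y _ ih =>
    obtain ⟨hxH, i, g, rfl⟩ := hS x hx
    exact step i g y hxH ih
  | inv_mul_cancel x hx y _ ih =>
    obtain ⟨hxH, i, g, rfl⟩ := hS x hx
    rw [← map_inv]
    exact step i g⁻¹ y (by rw [map_inv]; exact inv_mem hxH) ih

end AmalgamConj

open Monoid Monoid.CoprodI Monoid.PushoutI AmalgamConj

/-- Let `G = G₁ *_K G₂` (here: the pushout `Monoid.PushoutI φ` of the
injective homomorphisms `φ true : K → G true` and `φ false : K → G false`), let `A`, `B` be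
the images of the two factors, `U` the image of `K`, `H ≤ G` and
`H₀ = ⟨(A ∩ H) ∪ (B ∩ H)⟩`. If there are `a ∈ A` with `a ∉ (A ∩ H)·U` and `b ∈ B` with
`b ∉ U` and `a b a⁻¹ ∈ H`, then `H ≠ H₀`. -/
theorem statement12 (K : Type*) [Group K] (G : Bool → Type*) [∀ i, Group (G i)]
    (φ : ∀ i, K →* G i) (hφ : ∀ i, Function.Injective (φ i))
    (H : Subgroup (Monoid.PushoutI φ))
    (A : Subgroup (Monoid.PushoutI φ)) (hA : A = (Monoid.PushoutI.of (φ := φ) true).range)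
    (B : Subgroup (Monoid.PushoutI φ)) (hB : B = (Monoid.PushoutI.of (φ := φ) false).range)
    (U : Subgroup (Monoid.PushoutI φ)) (hU : U = (Monoid.PushoutI.base φ).range)
    (H₀ : Subgroup (Monoid.PushoutI φ))
    (hH₀ : H₀ = Subgroup.closure ((↑A ∩ ↑H) ∪ (↑B ∩ ↑H)))
    (a : Monoid.PushoutI φ) (ha : a ∈ A)
    (ha' : a ∉ (↑A ∩ ↑H) * (↑U : Set (Monoid.PushoutI φ)))
    (b : Monoid.PushoutI φ) (hb : b ∈ B) (hb' : b ∉ U)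
    (hconj : a * b * a⁻¹ ∈ H) :
    H ≠ H₀ := by
  subst hA hB hU
  intro hHH
  obtain ⟨a, rfl⟩ := ha
  obtain ⟨b, rfl⟩ := hb
  have hx := hconj
  rw [hHH, hH₀] at hx
  obtain ⟨k, w, hk, hw, hwH, heq⟩ := exists_reduced_of_mem_closure H _ (by
    rintro x (⟨hx, hxH⟩ | ⟨hx, hxH⟩)
    · exact ⟨hxH, true, hx⟩
    · exact ⟨hxH, false, hx⟩) _ hx
  obtain ⟨g₀, w₀, hg₀, hw₀, -, hi₀, hprod₀⟩ := exists_split H true w hw hwH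
  -- This is the hypothesis `a ∉ (A ∩ H) * U`, transported to the factor `G true`.
  have key : ∀ g : G true, (of true g : PushoutI φ) ∈ H → a⁻¹ * g ∉ (φ true).range := by
    rintro g hg ⟨u, hu⟩
    refine ha' ⟨of true g, ⟨⟨g, rfl⟩, hg⟩, base φ u⁻¹, ⟨u⁻¹, rfl⟩, ?_⟩
    change of true g * base φ u⁻¹ = of true a
    rw [← of_apply_eq_base φ true, ← map_mul, map_inv, hu]
    simp
  have har : a ∉ (φ true).range := by
    have := key 1 (by simp)
    rwa [mul_one, inv_mem_iff] at this
  have hbr : b⁻¹ ∉ (φ false).range := by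
    rw [inv_mem_iff]
    rintro ⟨u, rfl⟩
    exact hb' ⟨u, (of_apply_eq_base φ false u).symm⟩
  obtain ⟨w₁, hw₁, hl₁, hp₁⟩ := exists_reduced_cons (a⁻¹ * (φ true k * g₀))
    (key _ (by rw [map_mul, of_apply_eq_base]; exact mul_mem hk hg₀)) w₀ hw₀ hi₀
  obtain ⟨w₂, hw₂, hl₂, hp₂⟩ := exists_reduced_cons b⁻¹ hbr w₁ hw₁ (by simp [Word.fstIdx, hl₁])
  obtain ⟨w₃, hw₃, hl₃, hp₃⟩ := exists_reduced_cons a har w₂ hw₂ (by simp [Word.fstIdx, hl₂])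
  have hone : (ofCoprodI w₃.prod : PushoutI φ) = 1 := by
    have h : of true a * of false b * (of true a)⁻¹ =
        base φ k * (of true g₀ * ofCoprodI w₀.prod) := by rw [heq, hprod₀]
    rw [hp₃, hp₂, hp₁, map_mul, map_mul, of_apply_eq_base, map_inv, map_inv, mul_assoc,
      mul_assoc, ← h]
    group
  have := hw₃.eq_empty_of_mem_range hφ (by rw [hone]; exact one_mem _)
  rw [this] at hl₃
  simp [Word.empty] at hl₃
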